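/- For a 4n-dimensional HKT-manifold with torsion three-form T = I dω_I = J dω_J = K dω_K, the exterior derivatives of the Kähler forms satisfy t = −Λ_I dω_I = KΛ_J dω_I = −JΛ_K dω_I (and cyclically), where t = I d*ω_I = J d*ω_J = K d*ω_K is the common Lee form. Furthermore Iλ_I = Jλ_J = Kλ_K = (1/2n) t, θ^ξ = θ^ξ_I = θ^ξ_J = θ^ξ_K, and the one-form parts of the β_A satisfy ν^I_4 = ν^J_4 = ν^K_4 = 2t and, when n > 1, ν^I_3 = ν^J_3 = ν^K_3 = 32 θ^ξ = (4/(2n+1)) t. -/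

import Mathlib

/-!  Synthetic (Koszul-style) model of an almost quaternion-Hermitian `4n`-manifold.

`C` plays the role of the commutative ℝ-algebra of smooth functions and `V` that of
the `C`-module of vector fields, equipped with a directional derivative `D`, a Lie
bracket, a Riemannian metric `g` together with its Levi-Civita connection `nab`
(characterised by being torsion-free and metric), a local adapted basis `I, J, K`
of anticommuting almost complex structures with `K = I J`, each compatible with the
metric, and a (local) orthonormal frame.  -/

noncomputable section

open scoped BigOperators

structure AQH (n : ℕ) (C : Type*) (V : Type*) [CommRing C] [Algebra ℝ C]
    [AddCommGroup V] [Module C V] where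
  /-- derivative of a function along a vector field -/
  D : V → C → C
  D_add : ∀ X f g, D X (f + g) = D X f + D X g
  D_mul : ∀ X f g, D X (f * g) = f * D X g + g * D X f
  D_const : ∀ X (r : ℝ), D X (algebraMap ℝ C r) = 0
  D_addX : ∀ X Y f, D (X + Y) f = D X f + D Y f
  D_smulX : ∀ (f : C) (X : V) (h : C), D (f • X) h = f * D X h
  /-- the Lie bracket of vector fields -/
  bracket : V → V → V
  bracket_skew : ∀ X Y, bracket X Y = -bracket Y X
  bracket_add : ∀ X Y Z, bracket X (Y + Z) = bracket X Y + bracket X Z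
  bracket_smul : ∀ X (f : C) Y, bracket X (f • Y) = f • bracket X Y + (D X f) • Y
  bracket_jacobi : ∀ X Y Z,
    bracket X (bracket Y Z) + bracket Y (bracket Z X) + bracket Z (bracket X Y) = 0
  D_bracket : ∀ X Y f, D (bracket X Y) f = D X (D Y f) - D Y (D X f)
  /-- the Riemannian metric -/
  g : V → V → C
  g_symm : ∀ X Y, g X Y = g Y X
  g_add : ∀ X Y Z, g (X + Y) Z = g X Z + g Y Z
  g_smul : ∀ (f : C) X Y, g (f • X) Y = f * g X Y
  /-- the Levi-Civita connection -/
  nab : V → V → V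
  nab_addX : ∀ X Y Z, nab (X + Y) Z = nab X Z + nab Y Z
  nab_smulX : ∀ (f : C) X Y, nab (f • X) Y = f • nab X Y
  nab_add : ∀ X Y Z, nab X (Y + Z) = nab X Y + nab X Z
  nab_leibniz : ∀ X (f : C) Y, nab X (f • Y) = f • nab X Y + (D X f) • Y
  torsion_free : ∀ X Y, nab X Y - nab Y X = bracket X Y
  nab_metric : ∀ X Y Z, D X (g Y Z) = g (nab X Y) Z + g Y (nab X Z)
  /-- the (local) adapted basis of almost complex structures -/
  I : V → V
  J : V → V
  K : V → V
  I_lin : ∀ (f : C) X Y, I (f • X + Y) = f • I X + I Y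
  J_lin : ∀ (f : C) X Y, J (f • X + Y) = f • J X + J Y
  K_lin : ∀ (f : C) X Y, K (f • X + Y) = f • K X + K Y
  I_sq : ∀ X, I (I X) = -X
  J_sq : ∀ X, J (J X) = -X
  K_def : ∀ X, K X = I (J X)
  anticomm : ∀ X, I (J X) = -J (I X)
  I_metric : ∀ X Y, g (I X) (I Y) = g X Y
  J_metric : ∀ X Y, g (J X) (J Y) = g X Y
  /-- a (local) orthonormal frame -/
  frame : Fin (4 * n) → V
  frame_orthonormal : ∀ i j, g (frame i) (frame j) = if i = j then 1 else 0
  frame_span : ∀ X, X = ∑ i, g X (frame i) • frame i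

namespace AQH

section ops

variable {C V : Type*} [CommRing C]

/-- the operator `A_(1)` on covariant 3-tensors -/
def op1 (A : V → V) (ψ : V → V → V → C) : V → V → V → C := fun X Y Z => -ψ (A X) Y Z

/-- the operator `A_(2)` on covariant 3-tensors -/
def op2 (A : V → V) (ψ : V → V → V → C) : V → V → V → C := fun X Y Z => -ψ X (A Y) Z

/-- the operator `A_(3)` on covariant 3-tensors -/
def op3 (A : V → V) (ψ : V → V → V → C) : V → V → V → C := fun X Y Z => -ψ X Y (A Z)

/-- the operator `A_(12) = A_(1) A_(2)` on covariant 3-tensors -/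
def op12 (A : V → V) (ψ : V → V → V → C) : V → V → V → C := fun X Y Z => ψ (A X) (A Y) Z

/-- the operator `A_(13) = A_(1) A_(3)` on covariant 3-tensors -/
def op13 (A : V → V) (ψ : V → V → V → C) : V → V → V → C := fun X Y Z => ψ (A X) Y (A Z)

/-- the operator `A_(23) = A_(2) A_(3)` on covariant 3-tensors -/
def op23 (A : V → V) (ψ : V → V → V → C) : V → V → V → C := fun X Y Z => ψ X (A Y) (A Z)

/-- the operator `𝓛_A = A_(12) + A_(13) + A_(23)` on three-forms -/
def calL (A : V → V) (ψ : V → V → V → C) : V → V → V → C :=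
  fun X Y Z => op12 A ψ X Y Z + op13 A ψ X Y Z + op23 A ψ X Y Z

/-- the action `(A ν)(X) = -ν (A X)` of `A` on a one-form -/
def act1 (A : V → V) (ν : V → C) : V → C := fun X => -ν (A X)

/-- the action `(A ψ)(X,Y,Z) = -ψ(AX,AY,AZ)` of `A` on a three-form -/
def act3 (A : V → V) (ψ : V → V → V → C) : V → V → V → C :=
  fun X Y Z => -ψ (A X) (A Y) (A Z)

/-- wedge product of two one-forms -/
def wedge11 (α β : V → C) : V → V → C := fun X Y => α X * β Y - α Y * β X

/-- wedge product of a one-form and a two-form -/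
def wedge12 (ν : V → C) (ω : V → V → C) : V → V → V → C :=
  fun X Y Z => ν X * ω Y Z - ν Y * ω X Z + ν Z * ω X Y

/-- wedge product of two two-forms -/
def wedge22 (α β : V → V → C) : V → V → V → V → C := fun X Y Z W =>
  α X Y * β Z W - α X Z * β Y W + α X W * β Y Z
    + α Z W * β X Y - α Y W * β X Z + α Y Z * β X W

/-- a (0,3)-tensor is an alternating three-form -/
def IsAlt3 (T : V → V → V → C) : Prop :=
  (∀ X Y Z, T Y X Z = -T X Y Z) ∧ (∀ X Y Z, T X Z Y = -T X Y Z)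

variable [AddCommGroup V] [Module C V]

/-- `C`-linearity (tensoriality) of a three-form in its first argument -/
def Lin3 (T : V → V → V → C) : Prop :=
  ∀ (f : C) X X' Y Z, T (f • X + X') Y Z = f * T X Y Z + T X' Y Z

/-- `C`-linearity (tensoriality) of a one-form -/
def Lin1 (ν : V → C) : Prop := ∀ (f : C) X X', ν (f • X + X') = f * ν X + ν X'

end ops

section derived

variable {n : ℕ} {C V : Type*} [CommRing C] [Algebra ℝ C] [AddCommGroup V] [Module C V]
  [Module ℝ V] [IsScalarTower ℝ C V]

variable (M : AQH n C V)

/-- the Kähler form `ω_A(X,Y) = g(X, A Y)` -/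
def omega (A : V → V) : V → V → C := fun X Y => M.g X (A Y)

/-- `(∇_X A) Y` -/
def nabA (A : V → V) : V → V → V := fun X Y => M.nab X (A Y) - A (M.nab X Y)

/-- covariant derivative of a 2-form: `(∇_X ψ)(Y,Z)` -/
def nab2 (ψ : V → V → C) : V → V → V → C :=
  fun X Y Z => M.D X (ψ Y Z) - ψ (M.nab X Y) Z - ψ Y (M.nab X Z)

/-- covariant derivative of a 4-form -/
def nab4 (ψ : V → V → V → V → C) : V → V → V → V → V → C :=
  fun X Y Z W U => M.D X (ψ Y Z W U) - ψ (M.nab X Y) Z W U - ψ Y (M.nab X Z) W U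
    - ψ Y Z (M.nab X W) U - ψ Y Z W (M.nab X U)

/-- exterior derivative of a one-form -/
def d1 (ν : V → C) : V → V → C :=
  fun X Y => M.D X (ν Y) - M.D Y (ν X) - ν (M.bracket X Y)

/-- exterior derivative of a two-form -/
def d2 (ψ : V → V → C) : V → V → V → C :=
  fun X Y Z => M.D X (ψ Y Z) - M.D Y (ψ X Z) + M.D Z (ψ X Y)
    - ψ (M.bracket X Y) Z + ψ (M.bracket X Z) Y - ψ (M.bracket Y Z) X

/-- exterior derivative of a four-form -/
def d4 (ψ : V → V → V → V → C) : V → V → V → V → V → C := fun X Y Z W U =>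
  M.D X (ψ Y Z W U) - M.D Y (ψ X Z W U) + M.D Z (ψ X Y W U) - M.D W (ψ X Y Z U)
      + M.D U (ψ X Y Z W)
    - ψ (M.bracket X Y) Z W U + ψ (M.bracket X Z) Y W U - ψ (M.bracket X W) Y Z U
      + ψ (M.bracket X U) Y Z W
    - ψ (M.bracket Y Z) X W U + ψ (M.bracket Y W) X Z U - ψ (M.bracket Y U) X Z W
    - ψ (M.bracket Z W) X Y U + ψ (M.bracket Z U) X Y W
    - ψ (M.bracket W U) X Y Z

/-- the Nijenhuis tensor `N_A(X,Y)` -/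
def nijV (A : V → V) : V → V → V := fun X Y =>
  M.bracket X Y + A (M.bracket (A X) Y) + A (M.bracket X (A Y)) - M.bracket (A X) (A Y)

/-- the Nijenhuis `(0,3)`-tensor `N_A(X,Y,Z) = g(X, N_A(Y,Z))` -/
def nij3 (A : V → V) : V → V → V → C := fun X Y Z => M.g X (M.nijV A Y Z)

/-- the induced inner product of two 2-forms,
`⟨ψ,φ⟩ = (1/2!) ψ(e_i,e_j) φ(e_i,e_j)` -/
def inner2 (ψ φ : V → V → C) : C :=
  (1/2 : ℝ) • ∑ i, ∑ j, ψ (M.frame i) (M.frame j) * φ (M.frame i) (M.frame j)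

/-- the contraction `(Λ_A β)(X) = ⟨X ⌟ β, ω_A⟩` of a three-form -/
def Lam (A : V → V) (β : V → V → V → C) : V → C :=
  fun X => (1/2 : ℝ) •
    ∑ i, ∑ j, β X (M.frame i) (M.frame j) * M.omega A (M.frame i) (M.frame j)

/-- `λ_I(X) = (1/2n) ⟨∇_X ω_J, ω_K⟩` -/
def lambdaI : V → C := fun X =>
  (1/(2*(n:ℝ))) • M.inner2 (fun Y Z => M.nab2 (M.omega M.J) X Y Z) (M.omega M.K)

/-- `λ_J(X) = (1/2n) ⟨∇_X ω_K, ω_I⟩` -/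
def lambdaJ : V → C := fun X =>
  (1/(2*(n:ℝ))) • M.inner2 (fun Y Z => M.nab2 (M.omega M.K) X Y Z) (M.omega M.I)

/-- `λ_K(X) = (1/2n) ⟨∇_X ω_I, ω_J⟩` -/
def lambdaK : V → C := fun X =>
  (1/(2*(n:ℝ))) • M.inner2 (fun Y Z => M.nab2 (M.omega M.I) X Y Z) (M.omega M.J)

/-- codifferential of a two-form -/
def codiff2 (ψ : V → V → C) : V → C := fun Z => -∑ i, M.nab2 ψ (M.frame i) (M.frame i) Z

/-- codifferential of a four-form -/
def codiff4 (ψ : V → V → V → V → C) : V → V → V → C :=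
  fun X Y Z => -∑ i, M.nab4 ψ (M.frame i) (M.frame i) X Y Z

/-- `β_I = J dω_J + K dω_K` -/
def betaI : V → V → V → C := fun X Y Z =>
  act3 M.J (M.d2 (M.omega M.J)) X Y Z + act3 M.K (M.d2 (M.omega M.K)) X Y Z

/-- `β_J = K dω_K + I dω_I` -/
def betaJ : V → V → V → C := fun X Y Z =>
  act3 M.K (M.d2 (M.omega M.K)) X Y Z + act3 M.I (M.d2 (M.omega M.I)) X Y Z

/-- `β_K = I dω_I + J dω_J` -/
def betaK : V → V → V → C := fun X Y Z =>
  act3 M.I (M.d2 (M.omega M.I)) X Y Z + act3 M.J (M.d2 (M.omega M.J)) X Y Z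

/-- the intrinsic torsion
`ξ_X Y = -(1/4) Σ_A A (∇_X A) Y + (1/2) Σ_A λ_A(X) A Y` -/
def xi : V → V → V := fun X Y =>
  (-(1/4 : ℝ)) • (M.I (M.nabA M.I X Y) + M.J (M.nabA M.J X Y) + M.K (M.nabA M.K X Y))
    + (1/2 : ℝ) • (M.lambdaI X • M.I Y + M.lambdaJ X • M.J Y + M.lambdaK X • M.K Y)

/-- the one-form `ν^I_4 = I Λ_I β_I` -/
def nu4I : V → C := act1 M.I (M.Lam M.I M.betaI)

/-- the one-form `ν^J_4 = J Λ_J β_J` -/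
def nu4J : V → C := act1 M.J (M.Lam M.J M.betaJ)

/-- the one-form `ν^K_4 = K Λ_K β_K` -/
def nu4K : V → C := act1 M.K (M.Lam M.K M.betaK)

/-- `ν^I_3`, determined by `J Λ_J β_I = (1/(2n-1)) (ν^I_4 + (2n+1)(n-1) ν^I_3)` -/
def nu3I : V → C := fun X =>
  (1/((2*(n:ℝ)+1) * ((n:ℝ)-1))) •
    ((2*(n:ℝ)-1) • act1 M.J (M.Lam M.J M.betaI) X - M.nu4I X)

/-- `ν^J_3`, determined by `K Λ_K β_J = (1/(2n-1)) (ν^J_4 + (2n+1)(n-1) ν^J_3)` -/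
def nu3J : V → C := fun X =>
  (1/((2*(n:ℝ)+1) * ((n:ℝ)-1))) •
    ((2*(n:ℝ)-1) • act1 M.K (M.Lam M.K M.betaJ) X - M.nu4J X)

/-- `ν^K_3`, determined by `I Λ_I β_K = (1/(2n-1)) (ν^K_4 + (2n+1)(n-1) ν^K_3)` -/
def nu3K : V → C := fun X =>
  (1/((2*(n:ℝ)+1) * ((n:ℝ)-1))) •
    ((2*(n:ℝ)-1) • act1 M.I (M.Lam M.I M.betaK) X - M.nu4K X)

/-- `β^{(E)}_{3I} = -(1/2) Jν^I_3 ∧ ω_J - (1/2) Kν^I_3 ∧ ω_K + (1/(2n-1)) Iν^I_3 ∧ ω_I` -/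
def betaE3I : V → V → V → C := fun X Y Z =>
  (-(1/2:ℝ)) • wedge12 (act1 M.J M.nu3I) (M.omega M.J) X Y Z
    + (-(1/2:ℝ)) • wedge12 (act1 M.K M.nu3I) (M.omega M.K) X Y Z
    + (1/(2*(n:ℝ)-1)) • wedge12 (act1 M.I M.nu3I) (M.omega M.I) X Y Z

def betaE3J : V → V → V → C := fun X Y Z =>
  (-(1/2:ℝ)) • wedge12 (act1 M.K M.nu3J) (M.omega M.K) X Y Z
    + (-(1/2:ℝ)) • wedge12 (act1 M.I M.nu3J) (M.omega M.I) X Y Z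
    + (1/(2*(n:ℝ)-1)) • wedge12 (act1 M.J M.nu3J) (M.omega M.J) X Y Z

def betaE3K : V → V → V → C := fun X Y Z =>
  (-(1/2:ℝ)) • wedge12 (act1 M.I M.nu3K) (M.omega M.I) X Y Z
    + (-(1/2:ℝ)) • wedge12 (act1 M.J M.nu3K) (M.omega M.J) X Y Z
    + (1/(2*(n:ℝ)-1)) • wedge12 (act1 M.K M.nu3K) (M.omega M.K) X Y Z

/-- `β_{4I} = -(1/(2n-1)) Iν^I_4 ∧ ω_I` -/
def beta4I : V → V → V → C := fun X Y Z =>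
  (-(1/(2*(n:ℝ)-1))) • wedge12 (act1 M.I M.nu4I) (M.omega M.I) X Y Z

def beta4J : V → V → V → C := fun X Y Z =>
  (-(1/(2*(n:ℝ)-1))) • wedge12 (act1 M.J M.nu4J) (M.omega M.J) X Y Z

def beta4K : V → V → V → C := fun X Y Z =>
  (-(1/(2*(n:ℝ)-1))) • wedge12 (act1 M.K M.nu4K) (M.omega M.K) X Y Z

/-- `β_I^{(3+K)} = β_I - β^{(E)}_{3I} - β_{4I}` -/
def beta3KI : V → V → V → C := fun X Y Z => M.betaI X Y Z - M.betaE3I X Y Z - M.beta4I X Y Z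

def beta3KJ : V → V → V → C := fun X Y Z => M.betaJ X Y Z - M.betaE3J X Y Z - M.beta4J X Y Z

def beta3KK : V → V → V → C := fun X Y Z => M.betaK X Y Z - M.betaE3K X Y Z - M.beta4K X Y Z

/-- `β_I^{(3)} = (1/6) (2 - 𝓛_J - 𝓛_K) β_I^{(3+K)}` -/
def beta3I : V → V → V → C := fun X Y Z =>
  (1/6:ℝ) • ((2:ℝ) • M.beta3KI X Y Z - calL M.J M.beta3KI X Y Z - calL M.K M.beta3KI X Y Z)

def beta3J : V → V → V → C := fun X Y Z =>
  (1/6:ℝ) • ((2:ℝ) • M.beta3KJ X Y Z - calL M.K M.beta3KJ X Y Z - calL M.I M.beta3KJ X Y Z)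

def beta3K : V → V → V → C := fun X Y Z =>
  (1/6:ℝ) • ((2:ℝ) • M.beta3KK X Y Z - calL M.I M.beta3KK X Y Z - calL M.J M.beta3KK X Y Z)

/-- `β_I^{(K)} = (1/6) (4 + 𝓛_J + 𝓛_K) β_I^{(3+K)}` -/
def betaKI : V → V → V → C := fun X Y Z =>
  (1/6:ℝ) • ((4:ℝ) • M.beta3KI X Y Z + calL M.J M.beta3KI X Y Z + calL M.K M.beta3KI X Y Z)

def betaKJ : V → V → V → C := fun X Y Z =>
  (1/6:ℝ) • ((4:ℝ) • M.beta3KJ X Y Z + calL M.K M.beta3KJ X Y Z + calL M.I M.beta3KJ X Y Z)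

def betaKK : V → V → V → C := fun X Y Z =>
  (1/6:ℝ) • ((4:ℝ) • M.beta3KK X Y Z + calL M.I M.beta3KK X Y Z + calL M.J M.beta3KK X Y Z)

/-- the three-form `ψ^{(3)} = (1/12)(β_I^{(3)} + β_J^{(3)} + β_K^{(3)})` determining `ξ_{33}` -/
def psi3 : V → V → V → C := fun X Y Z =>
  (1/12:ℝ) • (M.beta3I X Y Z + M.beta3J X Y Z + M.beta3K X Y Z)

/-- the three-form `ψ^{(K)} = -(1/48)(β_I^{(K)} + β_J^{(K)} + β_K^{(K)})` determining `ξ_{KH}` -/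
def psiK : V → V → V → C := fun X Y Z =>
  (-(1/48:ℝ)) • (M.betaKI X Y Z + M.betaKJ X Y Z + M.betaKK X Y Z)

/-- the three-form `ψ^{(3)}_I` determining `ξ_{3H}` -/
def psi3I : V → V → V → C := fun X Y Z =>
  (-(1/8:ℝ)) • M.beta3I X Y Z
    + (1/48:ℝ) • ((3:ℝ) • (M.beta3I X Y Z + M.beta3J X Y Z + M.beta3K X Y Z)
        + calL M.I (fun a b c => M.beta3I a b c + M.beta3J a b c + M.beta3K a b c) X Y Z)

def psi3J : V → V → V → C := fun X Y Z =>
  (-(1/8:ℝ)) • M.beta3J X Y Z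
    + (1/48:ℝ) • ((3:ℝ) • (M.beta3I X Y Z + M.beta3J X Y Z + M.beta3K X Y Z)
        + calL M.J (fun a b c => M.beta3I a b c + M.beta3J a b c + M.beta3K a b c) X Y Z)

def psi3K : V → V → V → C := fun X Y Z =>
  (-(1/8:ℝ)) • M.beta3K X Y Z
    + (1/48:ℝ) • ((3:ℝ) • (M.beta3I X Y Z + M.beta3J X Y Z + M.beta3K X Y Z)
        + calL M.K (fun a b c => M.beta3I a b c + M.beta3J a b c + M.beta3K a b c) X Y Z)

/-- the three-form `ψ^{(K)}_I` determining `ξ_{K3}` -/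
def psiKI : V → V → V → C := fun X Y Z =>
  (-(1/2:ℝ)) • M.betaKI X Y Z
    + (1/6:ℝ) • (M.betaKI X Y Z + M.betaKJ X Y Z + M.betaKK X Y Z)

def psiKJ : V → V → V → C := fun X Y Z =>
  (-(1/2:ℝ)) • M.betaKJ X Y Z
    + (1/6:ℝ) • (M.betaKI X Y Z + M.betaKJ X Y Z + M.betaKK X Y Z)

def psiKK : V → V → V → C := fun X Y Z =>
  (-(1/2:ℝ)) • M.betaKK X Y Z
    + (1/6:ℝ) • (M.betaKI X Y Z + M.betaKJ X Y Z + M.betaKK X Y Z)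

/-- the one-form `θ^ξ` determining `ξ_{EH}`,
defined by `(6/n)(2n+1)(n-1) θ^ξ(X) = -⟨ξ_{e_i} e_i, X⟩` -/
def thetaXi : V → C := fun X =>
  (-((n:ℝ)/(6*(2*(n:ℝ)+1)*((n:ℝ)-1)))) • ∑ i, M.g (M.xi (M.frame i) (M.frame i)) X

/-- the local one-form `θ^ξ_I`, defined by `(2/n)(2n+1)(n-1) θ^ξ_I(X) = -⟨I ξ_{e_i} I e_i, X⟩` -/
def thetaXiI : V → C := fun X =>
  (-((n:ℝ)/(2*(2*(n:ℝ)+1)*((n:ℝ)-1)))) •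
    ∑ i, M.g (M.I (M.xi (M.frame i) (M.I (M.frame i)))) X

def thetaXiJ : V → C := fun X =>
  (-((n:ℝ)/(2*(2*(n:ℝ)+1)*((n:ℝ)-1)))) •
    ∑ i, M.g (M.J (M.xi (M.frame i) (M.J (M.frame i)))) X

def thetaXiK : V → C := fun X =>
  (-((n:ℝ)/(2*(2*(n:ℝ)+1)*((n:ℝ)-1)))) •
    ∑ i, M.g (M.K (M.xi (M.frame i) (M.K (M.frame i)))) X

/-- `α_I = -λ_I ⊗ g + (1/2)(J_(2) - J_(3)) ∇ω_K` -/
def alphaI : V → V → V → C := fun X Y Z =>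
  -(M.lambdaI X * M.g Y Z)
    + (1/2:ℝ) • (-(M.nab2 (M.omega M.K) X (M.J Y) Z) + M.nab2 (M.omega M.K) X Y (M.J Z))

def alphaJ : V → V → V → C := fun X Y Z =>
  -(M.lambdaJ X * M.g Y Z)
    + (1/2:ℝ) • (-(M.nab2 (M.omega M.I) X (M.K Y) Z) + M.nab2 (M.omega M.I) X Y (M.K Z))

def alphaK : V → V → V → C := fun X Y Z =>
  -(M.lambdaK X * M.g Y Z)
    + (1/2:ℝ) • (-(M.nab2 (M.omega M.J) X (M.I Y) Z) + M.nab2 (M.omega M.J) X Y (M.I Z))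

/-- the one-form `η_I(X) = α_I(e_i; e_i, X)` -/
def etaI : V → C := fun X => ∑ i, M.alphaI (M.frame i) (M.frame i) X

def etaJ : V → C := fun X => ∑ i, M.alphaJ (M.frame i) (M.frame i) X

def etaK : V → C := fun X => ∑ i, M.alphaK (M.frame i) (M.frame i) X

/-- the fundamental four-form `Ω = Σ_A ω_A ∧ ω_A` -/
def Omega4 : V → V → V → V → C := fun X Y Z W =>
  wedge22 (M.omega M.I) (M.omega M.I) X Y Z W
    + wedge22 (M.omega M.J) (M.omega M.J) X Y Z W
    + wedge22 (M.omega M.K) (M.omega M.K) X Y Z W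

/-- the one-form `θ^{d*Ω} = (1/3) Σ_A A Λ_A d*Ω` -/
def thetaDOmega : V → C := fun X =>
  (1/3:ℝ) • (act1 M.I (M.Lam M.I (M.codiff4 M.Omega4)) X
    + act1 M.J (M.Lam M.J (M.codiff4 M.Omega4)) X
    + act1 M.K (M.Lam M.K (M.codiff4 M.Omega4)) X)

/-- the vector-valued torsion: `g(W, T(X,Y)) = T(W,X,Y)` -/
def Tvec (T : V → V → V → C) : V → V → V := fun X Y => ∑ i, T (M.frame i) X Y • M.frame i

/-- the connection `∇ + (1/2) T` associated to a torsion (0,3)-tensor `T` -/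
def nabT (T : V → V → V → C) : V → V → V := fun X Y => M.nab X Y + (1/2:ℝ) • M.Tvec T X Y

/-- a connection is metric -/
def MetricConn (nab' : V → V → V) : Prop :=
  ∀ X Y Z, M.D X (M.g Y Z) = M.g (nab' X Y) Z + M.g Y (nab' X Z)

/-- a connection is quaternionic, with associated local one-forms `γ_I, γ_J, γ_K`:
`∇'_X I = γ_K(X) J - γ_J(X) K`, and cyclically -/
def QuatConn (nab' : V → V → V) (γI γJ γK : V → C) : Prop :=
  (∀ X Y, nab' X (M.I Y) - M.I (nab' X Y) = γK X • M.J Y - γJ X • M.K Y) ∧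
  (∀ X Y, nab' X (M.J Y) - M.J (nab' X Y) = γI X • M.K Y - γK X • M.I Y) ∧
  (∀ X Y, nab' X (M.K Y) - M.K (nab' X Y) = γJ X • M.I Y - γI X • M.J Y)

/-- the HKT condition: `I, J, K` integrable and there is a metric connection
`∇ + (1/2)T` with totally skew torsion making `I, J, K` parallel -/
def IsHKT : Prop :=
  (∀ X Y, M.nijV M.I X Y = 0) ∧ (∀ X Y, M.nijV M.J X Y = 0) ∧
  (∀ X Y, M.nijV M.K X Y = 0) ∧
  ∃ T : V → V → V → C, IsAlt3 T ∧ Lin3 T ∧ M.MetricConn (M.nabT T) ∧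
    (∀ X Y, M.nabT T X (M.I Y) = M.I (M.nabT T X Y)) ∧
    (∀ X Y, M.nabT T X (M.J Y) = M.J (M.nabT T X Y)) ∧
    (∀ X Y, M.nabT T X (M.K Y) = M.K (M.nabT T X Y))

/-- membership of a three-form in `KH`: type `{2,1}` for each `A` and `Λ_A ψ = 0` -/
def InKH3 (ψ : V → V → V → C) : Prop :=
  IsAlt3 ψ ∧ Lin3 ψ ∧
  calL M.I ψ = ψ ∧ calL M.J ψ = ψ ∧ calL M.K ψ = ψ ∧
  M.Lam M.I ψ = 0 ∧ M.Lam M.J ψ = 0 ∧ M.Lam M.K ψ = 0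

/-- the `(0,3)`-tensor of the `KH`-component of the torsion determined by `ψ^{(K)}`:
`3ψ - Σ_A A_(23) ψ` -/
def xiKH3 (ψ : V → V → V → C) : V → V → V → C := fun X Y Z =>
  (3:ℝ) • ψ X Y Z - (op23 M.I ψ X Y Z + op23 M.J ψ X Y Z + op23 M.K ψ X Y Z)

/-- the `(0,3)`-tensor of the `EH`-component of the torsion determined by the
one-form `θ`: `3 e_i ⊗ e_i ∧ θ - Σ_A (e_i ⊗ A e_i ∧ A θ + (2/n) A θ ⊗ ω_A)` -/
def xiEH3 (θ : V → C) : V → V → V → C := fun X Y Z =>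
  (3:ℝ) • ∑ i, M.g (M.frame i) X *
      (M.g (M.frame i) Y * θ Z - M.g (M.frame i) Z * θ Y)
  - ((∑ i, M.g (M.frame i) X *
        (M.g (M.I (M.frame i)) Y * act1 M.I θ Z - M.g (M.I (M.frame i)) Z * act1 M.I θ Y))
    + (∑ i, M.g (M.frame i) X *
        (M.g (M.J (M.frame i)) Y * act1 M.J θ Z - M.g (M.J (M.frame i)) Z * act1 M.J θ Y))
    + (∑ i, M.g (M.frame i) X *
        (M.g (M.K (M.frame i)) Y * act1 M.K θ Z - M.g (M.K (M.frame i)) Z * act1 M.K θ Y)))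
  - (2/(n:ℝ)) • (act1 M.I θ X * M.omega M.I Y Z + act1 M.J θ X * M.omega M.J Y Z
      + act1 M.K θ X * M.omega M.K Y Z)

/-- the intrinsic torsion lies in `(K+E)H`: it is the sum of a `KH`-tensor and an
`EH`-tensor as described in §3 of the paper -/
def inKEH : Prop :=
  ∃ (ψ : V → V → V → C) (θ : V → C), M.InKH3 ψ ∧ Lin1 θ ∧
    ∀ X Y Z, M.g Y (M.xi X Z) = M.xiKH3 ψ X Y Z + M.xiEH3 θ X Y Z

end derived

end AQH

namespace AQH

section aux

set_option linter.unusedSectionVars false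
set_option linter.unusedSimpArgs false

variable {n : ℕ} {C V : Type*} [CommRing C] [Algebra ℝ C] [AddCommGroup V] [Module C V]

/-- bundle a map that is linear in the sense of the structure fields -/
def mkL (A : V → V) (h : ∀ (f : C) X Y, A (f • X + Y) = f • A X + A Y) : V →ₗ[C] V where
  toFun := A
  map_add' X Y := by simpa using h 1 X Y
  map_smul' f X := by
    have h0 : A 0 = 0 := by simpa using h 1 0 0
    simpa [h0] using h f X 0

/-- bundle an alternating tensorial three-form -/
def mkT (T : V → V → V → C) (ha : IsAlt3 T) (hl : Lin3 T) : V →ₗ[C] V →ₗ[C] V →ₗ[C] C :=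
  have l1a : ∀ X X' Y Z, T (X + X') Y Z = T X Y Z + T X' Y Z := fun X X' Y Z => by
    simpa using hl 1 X X' Y Z
  have l1z : ∀ Y Z, T 0 Y Z = 0 := fun Y Z => by simpa using hl 1 0 0 Y Z
  have l1s : ∀ (f : C) X Y Z, T (f • X) Y Z = f * T X Y Z := fun f X Y Z => by
    simpa [l1z] using hl f X 0 Y Z
  have l2a : ∀ X Y Y' Z, T X (Y + Y') Z = T X Y Z + T X Y' Z := fun X Y Y' Z => by
    rw [ha.1 (Y + Y') X, ha.1 Y X, ha.1 Y' X, l1a]; ring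
  have l2s : ∀ (f : C) X Y Z, T X (f • Y) Z = f * T X Y Z := fun f X Y Z => by
    rw [ha.1 (f • Y) X, ha.1 Y X, l1s]; ring
  have l3a : ∀ X Y Z Z', T X Y (Z + Z') = T X Y Z + T X Y Z' := fun X Y Z Z' => by
    rw [ha.2 X (Z + Z') Y, ha.2 X Z Y, ha.2 X Z' Y, l2a]; ring
  have l3s : ∀ (f : C) X Y Z, T X Y (f • Z) = f * T X Y Z := fun f X Y Z => by
    rw [ha.2 X (f • Z) Y, ha.2 X Z Y, l2s]; ring
  { toFun := fun X =>
      { toFun := fun Y =>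
          { toFun := fun Z => T X Y Z
            map_add' := fun Z Z' => l3a X Y Z Z'
            map_smul' := fun f Z => l3s f X Y Z }
        map_add' := fun Y Y' => by ext Z; exact l2a X Y Y' Z
        map_smul' := fun f Y => by ext Z; exact l2s f X Y Z }
    map_add' := fun X X' => by ext Y Z; exact l1a X X' Y Z
    map_smul' := fun f X => by ext Y Z; exact l1s f X Y Z }

theorem mkT_apply (T : V → V → V → C) (ha : IsAlt3 T) (hl : Lin3 T) (X Y Z : V) :
    mkT T ha hl X Y Z = T X Y Z := rfl

variable (M : AQH n C V)

/-- the metric as a bilinear map -/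
def gL : V →ₗ[C] V →ₗ[C] C :=
  LinearMap.mk₂ C M.g M.g_add M.g_smul
    (fun X Y Z => by rw [M.g_symm, M.g_add, M.g_symm Y, M.g_symm Z])
    (fun f X Y => by rw [M.g_symm, M.g_smul, M.g_symm Y]; rfl)

theorem gL_apply (X Y : V) : M.gL X Y = M.g X Y := rfl

/-- an endomorphism which is an orthogonal complex structure -/
structure CS (P : V →ₗ[C] V) : Prop where
  sq : ∀ X, P (P X) = -X
  skew : ∀ X Y, M.g (P X) Y = -M.g X (P Y)

/-- a quaternionic triple -/
structure Trip (P Q R : V →ₗ[C] V) : Prop where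
  P1 : M.CS P
  Q1 : M.CS Q
  R1 : M.CS R
  PQ : ∀ X, P (Q X) = R X
  QR : ∀ X, Q (R X) = P X
  RP : ∀ X, R (P X) = Q X
  QP : ∀ X, Q (P X) = -R X
  RQ : ∀ X, R (Q X) = -P X
  PR : ∀ X, P (R X) = -Q X

variable {M}

theorem Trip.cyc {P Q R : V →ₗ[C] V} (h : M.Trip P Q R) : M.Trip Q R P :=
  ⟨h.Q1, h.R1, h.P1, h.QR, h.RP, h.PQ, h.RQ, h.PR, h.QP⟩

variable (M)

theorem expand (f : V →ₗ[C] C) (X : V) :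
    ∑ i, M.g X (M.frame i) * f (M.frame i) = f X := by
  conv_rhs => rw [M.frame_span X]
  simp

theorem expand' (f : V →ₗ[C] C) (X : V) :
    ∑ i, f (M.frame i) * M.g X (M.frame i) = f X := by
  rw [← M.expand f X]
  exact Finset.sum_congr rfl fun i _ => mul_comm _ _

theorem swap (b : V →ₗ[C] V →ₗ[C] C) {P : V →ₗ[C] V} (hP : M.CS P) :
    ∑ i, b (P (M.frame i)) (M.frame i) = -∑ i, b (M.frame i) (P (M.frame i)) := by
  have h1 : ∀ i, b (P (M.frame i)) (M.frame i)
      = ∑ j, M.g (P (M.frame i)) (M.frame j) * b (M.frame j) (M.frame i) := fun i =>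
    (M.expand (b.flip (M.frame i)) (P (M.frame i))).symm
  have h2 : ∀ j, b (M.frame j) (P (M.frame j))
      = ∑ i, M.g (P (M.frame j)) (M.frame i) * b (M.frame j) (M.frame i) := fun j =>
    (M.expand (b (M.frame j)) (P (M.frame j))).symm
  simp_rw [h1, h2]
  rw [Finset.sum_comm, ← Finset.sum_neg_distrib]
  refine Finset.sum_congr rfl fun j _ => ?_
  rw [← Finset.sum_neg_distrib]
  refine Finset.sum_congr rfl fun i _ => ?_
  rw [hP.skew, M.g_symm]; ring

theorem shift (T : V →ₗ[C] V →ₗ[C] V →ₗ[C] C) {P : V →ₗ[C] V} (hP : M.CS P)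
    (Q : V →ₗ[C] V) (X : V) :
    ∑ i, T X (P (M.frame i)) (Q (M.frame i))
      = -∑ i, T X (M.frame i) (Q (P (M.frame i))) := by
  simpa using M.swap ((T X).compl₂ Q) hP

/-- `σ_A(X) = Σ T(X, e_i, A e_i)` -/
def sg (T : V →ₗ[C] V →ₗ[C] V →ₗ[C] C) (A : V →ₗ[C] V) : V →ₗ[C] C where
  toFun X := ∑ i, T X (M.frame i) (A (M.frame i))
  map_add' X Y := by simp [Finset.sum_add_distrib]
  map_smul' f X := by simp [Finset.mul_sum]

theorem sg_apply (T : V →ₗ[C] V →ₗ[C] V →ₗ[C] C) (A : V →ₗ[C] V) (X : V) :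
    M.sg T A X = ∑ i, T X (M.frame i) (A (M.frame i)) := rfl

/-- the torsion data in a given complex structure -/
structure Par (T : V →ₗ[C] V →ₗ[C] V →ₗ[C] C) (A : V →ₗ[C] V) : Prop where
  a1 : ∀ X Y Z, T Y X Z = -T X Y Z
  a2 : ∀ X Y Z, T X Z Y = -T X Y Z
  cs : M.CS A
  der : ∀ X Y Z, M.g Z (M.nabA A X Y) = (-(1/2:ℝ)) • (T Z X (A Y) + T (A Z) X Y)
  cal : ∀ X Y Z, T (A X) (A Y) Z + T (A X) Y (A Z) + T X (A Y) (A Z) = T X Y Z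

variable {M}

theorem Par.cy {T : V →ₗ[C] V →ₗ[C] V →ₗ[C] C} {A : V →ₗ[C] V} (h : M.Par T A) (X Y Z : V) :
    T Y Z X = T X Y Z := by
  rw [h.a2 Y X Z, h.a1 X Y Z, neg_neg]

theorem half_cancel {a b : C} (h : a + a = b + b) : a = b := by
  have : (2:ℝ) • a = (2:ℝ) • b := by rw [two_smul, two_smul, h]
  have h2 := congrArg (fun c => (1/2:ℝ) • c) this
  simpa [smul_smul] using h2

theorem sg_rel {T : V →ₗ[C] V →ₗ[C] V →ₗ[C] C} {P Q R : V →ₗ[C] V} (h : M.Trip P Q R)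
    (hQ : M.Par T Q) (X : V) : M.sg T P X = -M.sg T R (Q X) := by
  have e1 : M.sg T P X = ∑ i, T (Q X) (Q (M.frame i)) (P (M.frame i))
      + ∑ i, T (Q X) (M.frame i) (Q (P (M.frame i)))
      + ∑ i, T X (Q (M.frame i)) (Q (P (M.frame i))) := by
    rw [sg_apply, ← Finset.sum_add_distrib, ← Finset.sum_add_distrib]
    exact Finset.sum_congr rfl fun i _ => (hQ.cal _ _ _).symm
  have e2 := M.shift T h.Q1 P (Q X)
  have e3 := M.shift T h.Q1 (Q ∘ₗ P) X
  simp only [LinearMap.comp_apply] at e3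
  rw [e2, e3] at e1
  simp only [h.PQ, h.QP, h.QR, map_neg, Finset.sum_neg_distrib, ← sg_apply] at e1
  apply half_cancel
  linear_combination e1

variable [Module ℝ V] [IsScalarTower ℝ C V]

theorem nab2_omega {A : V →ₗ[C] V} (_ : M.CS A) (X Y Z : V) :
    M.nab2 (M.omega A) X Y Z = M.g Y (M.nabA A X Z) := by
  rw [AQH.nab2, omega, M.nab_metric]
  simp only [omega, nabA, ← gL_apply, map_sub]
  ring

theorem Par.nab2 {T : V →ₗ[C] V →ₗ[C] V →ₗ[C] C} {A : V →ₗ[C] V} (h : M.Par T A) (X Y Z : V) :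
    M.nab2 (M.omega A) X Y Z = (1/2:ℝ) • (T X Y (A Z) + T X (A Y) Z) := by
  rw [nab2_omega h.cs, h.der, h.a1 X Y, h.a1 X (A Y)]
  module

theorem d2_nab2 {A : V →ₗ[C] V} (hA : M.CS A) (X Y Z : V) :
    M.d2 (M.omega A) X Y Z = M.nab2 (M.omega A) X Y Z + M.nab2 (M.omega A) Y Z X
      + M.nab2 (M.omega A) Z X Y := by
  have hs : ∀ X Y, M.g X (A Y) = -M.g Y (A X) := fun X Y => by
    rw [M.g_symm, hA.skew]
  have hD : ∀ X f, M.D X (-f) = -M.D X f := fun X f => by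
    have h0 : M.D X 0 = 0 := by simpa using M.D_const X 0
    have := M.D_add X f (-f)
    rw [add_neg_cancel, h0] at this
    linear_combination -this
  simp only [d2, AQH.nab2, omega, ← M.torsion_free]
  rw [hs X Z, hD, hs Y (M.nab X Z), hs Z (M.nab Y X), hs X (M.nab Z Y)]
  simp only [← gL_apply, map_sub, LinearMap.sub_apply]
  ring

theorem Par.d2 {T : V →ₗ[C] V →ₗ[C] V →ₗ[C] C} {A : V →ₗ[C] V} (h : M.Par T A) (X Y Z : V) :
    M.d2 (M.omega A) X Y Z = T (A X) (A Y) (A Z) := by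
  have c := h.cal (A X) (A Y) (A Z)
  simp only [h.cs.sq, map_neg, LinearMap.neg_apply, neg_neg] at c
  rw [← c, d2_nab2 h.cs, h.nab2, h.nab2, h.nab2]
  rw [h.cy Y Z (A X), h.cy (A X) Y Z, h.cy X Y (A Z), ← h.cy Z X (A Y)]
  module

theorem Par.act3 {T : V →ₗ[C] V →ₗ[C] V →ₗ[C] C} {A : V →ₗ[C] V} (h : M.Par T A) (X Y Z : V) :
    act3 A (M.d2 (M.omega A)) X Y Z = T X Y Z := by
  simp [AQH.act3, h.d2, h.cs.sq]

theorem Lam_eq (A : V →ₗ[C] V) (T : V →ₗ[C] V →ₗ[C] V →ₗ[C] C)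
    (a2 : ∀ X Y Z, T X Z Y = -T X Y Z) (β : V → V → V → C) (L : V → V) (r : ℝ)
    (hβ : ∀ X Y Z, β X Y Z = r • T (L X) Y Z) (X : V) :
    M.Lam A β X = (-(r/2)) • M.sg T A (L X) := by
  have : ∀ j, ∑ i, β X (M.frame i) (M.frame j) * M.omega A (M.frame i) (M.frame j)
      = (-r) • T (L X) (M.frame j) (A (M.frame j)) := fun j => by
    have e := M.expand' ((T (L X)).flip (M.frame j)) (A (M.frame j))
    simp only [LinearMap.flip_apply] at e
    rw [a2, ← neg_eq_iff_eq_neg] at e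
    rw [← e]
    simp only [hβ, omega, smul_mul_assoc, ← Finset.smul_sum, M.g_symm _ (A (M.frame j))]
    module
  rw [Lam, Finset.sum_comm]
  simp only [this, sg_apply, ← Finset.smul_sum]
  module

theorem Par.z2 {T : V →ₗ[C] V →ₗ[C] V →ₗ[C] C} {A : V →ₗ[C] V} (h : M.Par T A) (X Y : V) :
    T X Y Y = 0 := by
  apply half_cancel
  linear_combination h.a2 X Y Y

theorem Par.z1 {T : V →ₗ[C] V →ₗ[C] V →ₗ[C] C} {A : V →ₗ[C] V} (h : M.Par T A) (X Y : V) :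
    T Y Y X = 0 := by
  rw [h.cy X, h.z2]

theorem lee {T : V →ₗ[C] V →ₗ[C] V →ₗ[C] C} {A : V →ₗ[C] V} (h : M.Par T A) (X : V) :
    act1 A (M.codiff2 (M.omega A)) X = (1/2:ℝ) • M.sg T A (A X) := by
  simp only [act1, codiff2, neg_neg, h.nab2, ← Finset.smul_sum, h.z1, zero_add, sg_apply, h.cy (A X)]

theorem lam_eq {T : V →ₗ[C] V →ₗ[C] V →ₗ[C] C} {P Q R : V →ₗ[C] V} (h : M.Trip P Q R)
    (hQ : M.Par T Q) (X : V) :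
    M.inner2 (fun Y Z => M.nab2 (M.omega Q) X Y Z) (M.omega R)
      = (-(1/2:ℝ)) • M.sg T P X := by
  have key : ∀ j, ∑ i, M.nab2 (M.omega Q) X (M.frame i) (M.frame j)
        * M.omega R (M.frame i) (M.frame j)
      = (1/2:ℝ) • (T X (R (M.frame j)) (Q (M.frame j))
          - T X (M.frame j) (P (M.frame j))) := fun j => by
    have e1 := M.expand' ((T X).flip (Q (M.frame j))) (R (M.frame j))
    have e2 := M.expand' ((T X).flip (M.frame j) ∘ₗ Q) (R (M.frame j))
    simp only [LinearMap.flip_apply, LinearMap.comp_apply, h.QR] at e1 e2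
    rw [hQ.a2 X (M.frame j) (P (M.frame j)), ← neg_eq_iff_eq_neg] at e2
    rw [← e1, ← e2]
    simp only [hQ.nab2, omega, smul_mul_assoc, ← Finset.smul_sum, M.g_symm _ (R (M.frame j)),
      add_mul, Finset.sum_add_distrib]
    module
  rw [inner2, Finset.sum_comm]
  simp only [key, ← Finset.smul_sum, Finset.sum_sub_distrib, M.shift T h.R1 Q X, h.QR, ← sg_apply]
  module

theorem usum (u : V →ₗ[C] C) (A : V →ₗ[C] V) {B : V →ₗ[C] V} (hB : M.CS B) (Z : V) :
    ∑ i, u (A (M.frame i)) * M.g (B (M.frame i)) Z = -u (A (B Z)) := by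
  have e := M.expand' (u ∘ₗ A) (B Z)
  simp only [LinearMap.comp_apply] at e
  rw [← e, ← Finset.sum_neg_distrib]
  refine Finset.sum_congr rfl fun i _ => ?_
  rw [hB.skew, M.g_symm]; ring

theorem usum1 (u : V →ₗ[C] C) (A : V →ₗ[C] V) (Z : V) :
    ∑ i, u (A (M.frame i)) * M.g (M.frame i) Z = u (A Z) := by
  have e := M.expand' (u ∘ₗ A) Z
  simp only [LinearMap.comp_apply] at e
  rw [← e]
  refine Finset.sum_congr rfl fun i _ => ?_
  rw [M.g_symm]

/-- the shape of the intrinsic torsion of an HKT manifold -/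
def XiShape (M : AQH n C V) (T : V →ₗ[C] V →ₗ[C] V →ₗ[C] C) (u : V →ₗ[C] C) (s : ℝ)
    (P Q R : V →ₗ[C] V) (ξ : V → V → V) : Prop :=
  ∀ X Y Z, M.g (ξ X Y) Z =
    (-(1/8:ℝ)) • ((T (P Z) X (P Y) - T Z X Y) + (T (Q Z) X (Q Y) - T Z X Y)
      + (T (R Z) X (R Y) - T Z X Y))
    + ((1/2:ℝ) * s) • (u (P X) * M.g (P Y) Z + u (Q X) * M.g (Q Y) Z + u (R X) * M.g (R Y) Z)

theorem XiShape.cyc {T : V →ₗ[C] V →ₗ[C] V →ₗ[C] C} {u : V →ₗ[C] C} {s : ℝ}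
    {P Q R : V →ₗ[C] V} {ξ : V → V → V} (h : XiShape M T u s P Q R ξ) :
    XiShape M T u s Q R P ξ := by
  intro X Y Z
  rw [h X Y Z]
  module

theorem theta0 {T : V →ₗ[C] V →ₗ[C] V →ₗ[C] C} {u : V →ₗ[C] C} {s : ℝ}
    {P Q R : V →ₗ[C] V} {ξ : V → V → V} (h : XiShape M T u s P Q R ξ) (ht : M.Trip P Q R)
    (hp : M.Par T P)
    (uP : ∀ X, M.sg T P X = -u (P X)) (uQ : ∀ X, M.sg T Q X = -u (Q X))
    (uR : ∀ X, M.sg T R X = -u (R X)) (X : V) :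
    ∑ i, M.g (ξ (M.frame i) (M.frame i)) X = (-(3/8:ℝ) + 3/2 * s) • u X := by
  simp only [h _ _ _, hp.z2, sub_zero, Finset.sum_add_distrib, ← Finset.smul_sum,
    usum _ _ ht.P1, usum _ _ ht.Q1, usum _ _ ht.R1, ← sg_apply, uP, uQ, uR,
    ht.P1.sq, ht.Q1.sq, ht.R1.sq, map_neg, neg_neg]
  module

theorem theta1 {T : V →ₗ[C] V →ₗ[C] V →ₗ[C] C} {u : V →ₗ[C] C} {s : ℝ}
    {P Q R : V →ₗ[C] V} {ξ : V → V → V} (h : XiShape M T u s P Q R ξ) (ht : M.Trip P Q R)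
    (hp : M.Par T P)
    (uP : ∀ X, M.sg T P X = -u (P X)) (uQ : ∀ X, M.sg T Q X = -u (Q X))
    (uR : ∀ X, M.sg T R X = -u (R X)) (X : V) :
    ∑ i, M.g (P (ξ (M.frame i) (P (M.frame i)))) X = (-(1/8:ℝ) + 1/2 * s) • u X := by
  have gn : ∀ X Y, M.g (-X) Y = -M.g X Y := fun X Y => by simp [← gL_apply]
  simp only [ht.P1.skew, h _ _ _, ht.P1.sq, ht.QP, ht.RP, map_neg, hp.z2, gn, mul_neg,
    LinearMap.neg_apply, neg_neg, sub_zero, neg_zero, zero_sub,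
    Finset.sum_add_distrib, Finset.sum_sub_distrib, Finset.sum_neg_distrib, ← Finset.smul_sum,
    usum _ _ ht.P1, usum _ _ ht.Q1, usum _ _ ht.R1, usum1, ← sg_apply, uP, uQ, uR,
    ht.Q1.sq, ht.R1.sq, ht.QR, ht.RQ]
  module

theorem LamD {T : V →ₗ[C] V →ₗ[C] V →ₗ[C] C} {P : V →ₗ[C] V} (h : M.Par T P) (A : V →ₗ[C] V)
    (X : V) :
    M.Lam A (M.d2 (M.omega P)) X
      = (1/2:ℝ) • ∑ i, T (P X) (M.frame i) (P (A (P (M.frame i)))) := by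
  let T' : V →ₗ[C] V →ₗ[C] V →ₗ[C] C :=
    { toFun := fun X => (T X).compl₁₂ P P
      map_add' := fun X Y => by ext; simp
      map_smul' := fun f X => by ext; simp }
  have hT' : ∀ X Y Z, T' X Y Z = T X (P Y) (P Z) := fun _ _ _ => rfl
  have e := Lam_eq (M := M) A T' (fun X Y Z => by rw [hT', hT', h.a2]) (M.d2 (M.omega P)) P 1
    (fun X Y Z => by rw [h.d2, hT', one_smul]) X
  rw [e, sg_apply]
  simp only [hT']
  have e2 := M.shift T h.cs (P ∘ₗ A) (P X)
  simp only [LinearMap.comp_apply] at e2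
  rw [e2]
  module

theorem mkPar (T : V → V → V → C) (ha : IsAlt3 T) (hl : Lin3 T) {A : V →ₗ[C] V} (hA : M.CS A)
    (hn : ∀ X Y, M.nabT T X (A Y) = A (M.nabT T X Y)) (hN : ∀ X Y, M.nijV A X Y = 0) :
    M.Par (mkT T ha hl) A := by
  have a1 : ∀ X Y Z, mkT T ha hl Y X Z = -mkT T ha hl X Y Z := ha.1
  have a2 : ∀ X Y Z, mkT T ha hl X Z Y = -mkT T ha hl X Y Z := ha.2
  have gs : ∀ Z W, M.g Z (A W) = -M.g (A Z) W := fun Z W => by rw [hA.skew, neg_neg]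
  have tv : ∀ W X Y, M.g W (M.Tvec T X Y) = mkT T ha hl W X Y := fun W X Y => by
    have e := M.expand' (((mkT T ha hl).flip X).flip Y) W
    simp only [LinearMap.flip_apply] at e
    rw [← e, Tvec, ← gL_apply, map_sum]
    refine Finset.sum_congr rfl fun i _ => ?_
    rw [map_smul, gL_apply, smul_eq_mul, mkT_apply]
  have der : ∀ X Y Z, M.g Z (M.nabA A X Y)
      = (-(1/2:ℝ)) • (mkT T ha hl Z X (A Y) + mkT T ha hl (A Z) X Y) := by
    intro X Y Z
    have h1 : M.nabA A X Y = (-(1/2:ℝ)) • (M.Tvec T X (A Y) - A (M.Tvec T X Y)) := by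
      have h := hn X Y
      simp only [nabT, map_add, LinearMap.map_smul_of_tower] at h
      rw [nabA]
      have h' := eq_sub_of_add_eq h
      rw [h']
      module
    rw [h1, ← gL_apply, LinearMap.map_smul_of_tower, map_sub, gL_apply, gL_apply, gs, tv, tv,
      sub_neg_eq_add]
  refine ⟨a1, a2, hA, der, ?_⟩
  have hn2 : ∀ X Y W, 2 * M.g W (M.nab X (A Y)) = -(2 * M.g (A W) (M.nab X Y))
      - mkT T ha hl W X (A Y) - mkT T ha hl (A W) X Y := by
    intro X Y W
    have h := der X Y W
    rw [nabA, ← gL_apply, map_sub, gL_apply, gL_apply, gs] at h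
    have h2 := congrArg (fun c => (2:ℝ) • c) h
    simp only [smul_smul] at h2
    norm_num at h2
    simp only [two_smul] at h2
    linear_combination h2
  intro Z X Y
  have h0 : M.g Z (M.nijV A X Y) = 0 := by rw [hN, ← gL_apply, map_zero]
  simp only [nijV, ← M.torsion_free] at h0
  simp only [← gL_apply, map_sub, map_add] at h0
  simp only [gL_apply, gs] at h0
  have e1 := hn2 Y X (A Z)
  have e2 := hn2 X Y (A Z)
  have e3 := hn2 (A X) Y Z
  have e4 := hn2 (A Y) X Z
  have gn : ∀ X Y, M.g (-X) Y = -M.g X Y := fun X Y => by simp [← gL_apply]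
  simp only [hA.sq, gn, map_neg, LinearMap.neg_apply] at e1 e2
  apply half_cancel
  linear_combination 2 * h0 - e1 + e2 + e3 - e4 + a2 (A Z) (A X) Y - a2 Z X Y
    + a2 Z (A X) (A Y) + a2 (A Z) X (A Y)

theorem trip0 (M : AQH n C V) :
    M.Trip (mkL M.I M.I_lin) (mkL M.J M.J_lin) (mkL M.K M.K_lin) := by
  have In : ∀ X, M.I (-X) = -M.I X := fun X => map_neg (mkL M.I M.I_lin) X
  have Jn : ∀ X, M.J (-X) = -M.J X := fun X => map_neg (mkL M.J M.J_lin) X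
  have gn : ∀ X Y, M.g X (-Y) = -M.g X Y := fun X Y => by simp [← gL_apply]
  have JI : ∀ X, M.J (M.I X) = -M.I (M.J X) := fun X => by rw [M.anticomm, neg_neg]
  have sI : ∀ X Y, M.g (M.I X) Y = -M.g X (M.I Y) := fun X Y => by
    rw [← M.I_metric X, M.I_sq, gn, neg_neg]
  have sJ : ∀ X Y, M.g (M.J X) Y = -M.g X (M.J Y) := fun X Y => by
    rw [← M.J_metric X, M.J_sq, gn, neg_neg]
  refine ⟨⟨M.I_sq, sI⟩, ⟨M.J_sq, sJ⟩, ⟨fun X => ?_, fun X Y => ?_⟩, fun X => ?_, fun X => ?_,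
    fun X => ?_, fun X => ?_, fun X => ?_, fun X => ?_⟩
  · change M.K (M.K X) = -X
    simp only [M.K_def, JI, In, M.I_sq, M.J_sq, neg_neg]
  · change M.g (M.K X) Y = -M.g X (M.K Y)
    simp only [M.K_def, sI, sJ, JI, gn, neg_neg]
  · exact (M.K_def X).symm
  · change M.J (M.K X) = M.I X
    simp only [M.K_def, JI, In, M.I_sq, M.J_sq, neg_neg]
  · change M.K (M.I X) = M.J X
    simp only [M.K_def, JI, In, M.I_sq, M.J_sq, neg_neg]
  · change M.J (M.I X) = -M.K X
    rw [M.K_def, JI]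
  · change M.K (M.J X) = -M.I X
    simp only [M.K_def, JI, In, M.I_sq, M.J_sq, neg_neg]
  · change M.I (M.K X) = -M.J X
    simp only [M.K_def, JI, In, M.I_sq, M.J_sq, neg_neg]

theorem Lams {T : V →ₗ[C] V →ₗ[C] V →ₗ[C] C} {u : V →ₗ[C] C}
    {P Q R : V →ₗ[C] V} (ht : M.Trip P Q R) (hp : M.Par T P)
    (uP : ∀ X, M.sg T P X = -u (P X)) (uQ : ∀ X, M.sg T Q X = -u (Q X))
    (uR : ∀ X, M.sg T R X = -u (R X)) :
    (∀ X, M.Lam P (M.d2 (M.omega P)) X = -((1/2:ℝ) • u X)) ∧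
    (∀ X, act1 R (M.Lam Q (M.d2 (M.omega P))) X = (1/2:ℝ) • u X) ∧
    (∀ X, act1 Q (M.Lam R (M.d2 (M.omega P))) X = -((1/2:ℝ) • u X)) := by
  refine ⟨fun X => ?_, fun X => ?_, fun X => ?_⟩ <;>
  simp only [act1, LamD hp, ht.P1.sq, ht.QP, ht.RP, ht.PQ, ht.PR, map_neg, neg_neg, LinearMap.neg_apply,
    Finset.sum_neg_distrib, ← sg_apply, uP, uQ, uR, ht.Q1.sq, ht.R1.sq, smul_neg]

theorem nus {T : V →ₗ[C] V →ₗ[C] V →ₗ[C] C} {u : V →ₗ[C] C}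
    {P : V →ₗ[C] V} (hp : M.Par T P) (uP : ∀ X, M.sg T P X = -u (P X))
    (β : V → V → V → C) (hβ : ∀ X Y Z, β X Y Z = T X Y Z + T X Y Z) (X : V) :
    act1 P (M.Lam P β) X = u X := by
  rw [act1, Lam_eq (M := M) P T hp.a2 β id 2 (fun X Y Z => by rw [hβ, two_smul]; rfl), id, uP,
    hp.cs.sq, map_neg]
  module

theorem shape0 (M : AQH n C V) {T : V →ₗ[C] V →ₗ[C] V →ₗ[C] C} {u : V →ₗ[C] C} {s : ℝ}
    {P Q R : V →ₗ[C] V} (hp : M.Par T P) (hq : M.Par T Q) (hr : M.Par T R) {l m k : V → C}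
    (hl : ∀ X, l X = s • u (P X)) (hm : ∀ X, m X = s • u (Q X)) (hk : ∀ X, k X = s • u (R X)) :
    XiShape M T u s P Q R (fun X Y =>
      (-(1/4 : ℝ)) • (P (M.nabA P X Y) + Q (M.nabA Q X Y) + R (M.nabA R X Y))
        + (1/2 : ℝ) • (l X • P Y + m X • Q Y + k X • R Y)) := by
  intro X Y Z
  have key : ∀ {A : V →ₗ[C] V}, M.Par T A → M.g Z (A (M.nabA A X Y))
      = (1/2:ℝ) • (T (A Z) X (A Y) - T Z X Y) := fun {A} h => by
    rw [M.g_symm, h.cs.skew, M.g_symm, ← neg_eq_iff_eq_neg.mpr (neg_neg _).symm]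
    have e := h.der X Y (A Z)
    rw [h.cs.sq] at e
    rw [e]
    simp only [map_neg, LinearMap.neg_apply]
    module
  rw [M.g_symm, ← gL_apply]
  simp only [map_add, LinearMap.map_smul_of_tower, map_smul, gL_apply, key hp, key hq, key hr,
    hl, hm, hk, smul_eq_mul, smul_mul_assoc, M.g_symm Z]
  module

end aux

end AQH

open AQH in
/-- For a `4n`-dimensional HKT-manifold, with
`t = I d*ω_I = J d*ω_J = K d*ω_K` the common Lee form:
`t = -Λ_I dω_I = KΛ_J dω_I = -JΛ_K dω_I` (and cyclically);
`Iλ_I = Jλ_J = Kλ_K = (1/2n) t`; `θ^ξ = θ^ξ_I = θ^ξ_J = θ^ξ_K`;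
`ν^I_4 = ν^J_4 = ν^K_4 = 2t`; and, for `n > 1`,
`ν^I_3 = ν^J_3 = ν^K_3 = 32 θ^ξ = (4/(2n+1)) t`. -/
theorem statement12 {n : ℕ} {C V : Type*} [CommRing C] [Algebra ℝ C] [AddCommGroup V]
    [Module C V] [Module ℝ V] [IsScalarTower ℝ C V] (M : AQH n C V)
    (hHKT : M.IsHKT) :
    -- the three Lee forms agree; call the common value `t = I d*ω_I`
    (act1 M.I (M.codiff2 (M.omega M.I)) = act1 M.J (M.codiff2 (M.omega M.J)) ∧
     act1 M.J (M.codiff2 (M.omega M.J)) = act1 M.K (M.codiff2 (M.omega M.K))) ∧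
    -- `t = -Λ_I dω_I = KΛ_J dω_I = -JΛ_K dω_I`, etc.
    (act1 M.I (M.codiff2 (M.omega M.I)) = -M.Lam M.I (M.d2 (M.omega M.I)) ∧
     act1 M.I (M.codiff2 (M.omega M.I)) = act1 M.K (M.Lam M.J (M.d2 (M.omega M.I))) ∧
     act1 M.I (M.codiff2 (M.omega M.I)) = -act1 M.J (M.Lam M.K (M.d2 (M.omega M.I)))) ∧
    (act1 M.I (M.codiff2 (M.omega M.I)) = -M.Lam M.J (M.d2 (M.omega M.J)) ∧
     act1 M.I (M.codiff2 (M.omega M.I)) = act1 M.I (M.Lam M.K (M.d2 (M.omega M.J))) ∧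
     act1 M.I (M.codiff2 (M.omega M.I)) = -act1 M.K (M.Lam M.I (M.d2 (M.omega M.J)))) ∧
    (act1 M.I (M.codiff2 (M.omega M.I)) = -M.Lam M.K (M.d2 (M.omega M.K)) ∧
     act1 M.I (M.codiff2 (M.omega M.I)) = act1 M.J (M.Lam M.I (M.d2 (M.omega M.K))) ∧
     act1 M.I (M.codiff2 (M.omega M.I)) = -act1 M.I (M.Lam M.J (M.d2 (M.omega M.K)))) ∧
    -- `Iλ_I = Jλ_J = Kλ_K = (1/2n) t`
    (act1 M.I M.lambdaI = act1 M.J M.lambdaJ ∧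
     act1 M.J M.lambdaJ = act1 M.K M.lambdaK ∧
     act1 M.I M.lambdaI = (1/(2*(n:ℝ))) • act1 M.I (M.codiff2 (M.omega M.I))) ∧
    -- `θ^ξ = θ^ξ_I = θ^ξ_J = θ^ξ_K`
    (M.thetaXi = M.thetaXiI ∧ M.thetaXi = M.thetaXiJ ∧ M.thetaXi = M.thetaXiK) ∧
    -- `ν^I_4 = ν^J_4 = ν^K_4 = 2t`
    (M.nu4I = M.nu4J ∧ M.nu4J = M.nu4K ∧
     M.nu4I = (2:ℝ) • act1 M.I (M.codiff2 (M.omega M.I))) ∧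
    -- for `n > 1`: `ν^I_3 = ν^J_3 = ν^K_3 = 32 θ^ξ = (4/(2n+1)) t`
    (1 < n →
      (M.nu3I = M.nu3J ∧ M.nu3J = M.nu3K ∧
       M.nu3I = (32:ℝ) • M.thetaXi ∧
       M.nu3I = (4/(2*(n:ℝ)+1)) • act1 M.I (M.codiff2 (M.omega M.I)))) := by
  obtain ⟨NI, NJ, NK, T0, ha, hl, -, pI, pJ, pK⟩ := hHKT
  have ht := trip0 M
  have hI := mkPar T0 ha hl ht.P1 pI NI
  have hJ := mkPar T0 ha hl ht.Q1 pJ NJ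
  have hK := mkPar T0 ha hl ht.R1 pK NK
  set T := mkT T0 ha hl with hT
  set P := mkL M.I M.I_lin with hP
  set Q := mkL M.J M.J_lin with hQ
  set R := mkL M.K M.K_lin with hR
  obtain ⟨u, hu⟩ : ∃ u : V →ₗ[C] C, u = M.sg T P ∘ₗ P := ⟨_, rfl⟩
  have uP : ∀ X, M.sg T P X = -u (P X) := fun X => by
    rw [hu, LinearMap.comp_apply, ht.P1.sq, map_neg, neg_neg]
  have uQ : ∀ X, M.sg T Q X = -u (Q X) := fun X => by
    rw [hu, LinearMap.comp_apply, ht.PQ]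
    exact sg_rel ht.cyc hK X
  have uR : ∀ X, M.sg T R X = -u (R X) := fun X => by
    rw [hu, LinearMap.comp_apply, ht.PR, sg_rel ht hJ, map_neg, map_neg, ht.Q1.sq, map_neg,
      neg_neg, neg_neg]
  -- the Lee forms
  have tI : act1 M.I (M.codiff2 (M.omega M.I)) = fun X => (1/2:ℝ) • u X := funext fun X =>
    (lee hI X).trans (by rw [uP, ht.P1.sq, map_neg, neg_neg])
  have tJ : act1 M.J (M.codiff2 (M.omega M.J)) = fun X => (1/2:ℝ) • u X := funext fun X =>
    (lee hJ X).trans (by rw [uQ, ht.Q1.sq, map_neg, neg_neg])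
  have tK : act1 M.K (M.codiff2 (M.omega M.K)) = fun X => (1/2:ℝ) • u X := funext fun X =>
    (lee hK X).trans (by rw [uR, ht.R1.sq, map_neg, neg_neg])
  obtain ⟨a1, a2, a3⟩ := Lams ht hI uP uQ uR
  obtain ⟨b1, b2, b3⟩ := Lams ht.cyc hJ uQ uR uP
  obtain ⟨c1, c2, c3⟩ := Lams ht.cyc.cyc hK uR uP uQ
  -- the one-forms `λ`
  obtain ⟨s, hs⟩ : ∃ s : ℝ, s = (1/(2*(n:ℝ))) * (1/2) := ⟨_, rfl⟩
  have lI : ∀ X, M.lambdaI X = s • u (P X) := fun X =>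
    (congrArg (fun c => (1/(2*(n:ℝ))) • c) (lam_eq ht hJ X)).trans (by rw [uP, hs]; module)
  have lJ : ∀ X, M.lambdaJ X = s • u (Q X) := fun X =>
    (congrArg (fun c => (1/(2*(n:ℝ))) • c) (lam_eq ht.cyc hK X)).trans (by rw [uQ, hs]; module)
  have lK : ∀ X, M.lambdaK X = s • u (R X) := fun X =>
    (congrArg (fun c => (1/(2*(n:ℝ))) • c) (lam_eq ht.cyc.cyc hI X)).trans
      (by rw [uR, hs]; module)
  have mI : act1 M.I M.lambdaI = fun X => s • u X := funext fun X => by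
    rw [act1, lI]
    change -(s • u (P (P X))) = _
    rw [ht.P1.sq, map_neg, smul_neg, neg_neg]
  have mJ : act1 M.J M.lambdaJ = fun X => s • u X := funext fun X => by
    rw [act1, lJ]
    change -(s • u (Q (Q X))) = _
    rw [ht.Q1.sq, map_neg, smul_neg, neg_neg]
  have mK : act1 M.K M.lambdaK = fun X => s • u X := funext fun X => by
    rw [act1, lK]
    change -(s • u (R (R X))) = _
    rw [ht.R1.sq, map_neg, smul_neg, neg_neg]
  -- the one-forms `θ`
  have hx : XiShape M T u s P Q R M.xi := shape0 M hI hJ hK lI lJ lK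
  have s0 : ∀ X, ∑ i, M.g (M.xi (M.frame i) (M.frame i)) X = (-(3/8:ℝ) + 3/2 * s) • u X :=
    theta0 hx ht hI uP uQ uR
  have sI : ∀ X, ∑ i, M.g (M.I (M.xi (M.frame i) (M.I (M.frame i)))) X
      = (-(1/8:ℝ) + 1/2 * s) • u X := theta1 hx ht hI uP uQ uR
  have sJ : ∀ X, ∑ i, M.g (M.J (M.xi (M.frame i) (M.J (M.frame i)))) X
      = (-(1/8:ℝ) + 1/2 * s) • u X := theta1 hx.cyc ht.cyc hJ uQ uR uP
  have sK : ∀ X, ∑ i, M.g (M.K (M.xi (M.frame i) (M.K (M.frame i)))) X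
      = (-(1/8:ℝ) + 1/2 * s) • u X := theta1 hx.cyc.cyc ht.cyc.cyc hK uR uP uQ
  have coef : (-((n:ℝ)/(6*(2*(n:ℝ)+1)*((n:ℝ)-1)))) * (-(3/8:ℝ) + 3/2 * s)
      = (-((n:ℝ)/(2*(2*(n:ℝ)+1)*((n:ℝ)-1)))) * (-(1/8:ℝ) + 1/2 * s) := by
    have e : (n:ℝ)/(2*(2*(n:ℝ)+1)*((n:ℝ)-1)) = 3 * ((n:ℝ)/(6*(2*(n:ℝ)+1)*((n:ℝ)-1))) := by
      generalize 2*(n:ℝ)+1 = a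
      generalize (n:ℝ)-1 = b
      ring
    rw [e]; ring
  -- the one-forms `ν`
  have bI : ∀ X Y Z, M.betaI X Y Z = T X Y Z + T X Y Z := fun X Y Z =>
    congrArg₂ (· + ·) (hJ.act3 X Y Z) (hK.act3 X Y Z)
  have bJ : ∀ X Y Z, M.betaJ X Y Z = T X Y Z + T X Y Z := fun X Y Z =>
    congrArg₂ (· + ·) (hK.act3 X Y Z) (hI.act3 X Y Z)
  have bK : ∀ X Y Z, M.betaK X Y Z = T X Y Z + T X Y Z := fun X Y Z =>
    congrArg₂ (· + ·) (hI.act3 X Y Z) (hJ.act3 X Y Z)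
  have n4I : M.nu4I = fun X => u X := funext fun X => nus hI uP _ bI X
  have n4J : M.nu4J = fun X => u X := funext fun X => nus hJ uQ _ bJ X
  have n4K : M.nu4K = fun X => u X := funext fun X => nus hK uR _ bK X
  have vI : ∀ X, act1 M.J (M.Lam M.J M.betaI) X = u X := fun X => nus hJ uQ _ bI X
  have vJ : ∀ X, act1 M.K (M.Lam M.K M.betaJ) X = u X := fun X => nus hK uR _ bJ X
  have vK : ∀ X, act1 M.I (M.Lam M.I M.betaK) X = u X := fun X => nus hI uP _ bK X
  rw [tI, tJ, tK, mI, mJ, mK, n4I, n4J, n4K]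
  refine ⟨⟨rfl, rfl⟩, ⟨?_, ?_, ?_⟩, ⟨?_, ?_, ?_⟩, ⟨?_, ?_, ?_⟩, ⟨rfl, rfl, ?_⟩, ⟨?_, ?_, ?_⟩,
    ⟨rfl, rfl, ?_⟩, fun hn => ?_⟩
  · exact funext fun X => neg_eq_iff_eq_neg.mp (a1 X).symm
  · exact funext fun X => (a2 X).symm
  · exact funext fun X => neg_eq_iff_eq_neg.mp (a3 X).symm
  · exact funext fun X => neg_eq_iff_eq_neg.mp (b1 X).symm
  · exact funext fun X => (b2 X).symm
  · exact funext fun X => neg_eq_iff_eq_neg.mp (b3 X).symm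
  · exact funext fun X => neg_eq_iff_eq_neg.mp (c1 X).symm
  · exact funext fun X => (c2 X).symm
  · exact funext fun X => neg_eq_iff_eq_neg.mp (c3 X).symm
  · funext X
    rw [Pi.smul_apply, smul_smul, hs]
  · funext X
    rw [thetaXi, thetaXiI, s0, sI, smul_smul, smul_smul, coef]
  · funext X
    rw [thetaXi, thetaXiJ, s0, sJ, smul_smul, smul_smul, coef]
  · funext X
    rw [thetaXi, thetaXiK, s0, sK, smul_smul, smul_smul, coef]
  · funext X
    rw [Pi.smul_apply, smul_smul]
    norm_num
  · have hn' : (1:ℝ) < n := by exact_mod_cast hn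
    have h1 : (n:ℝ) - 1 ≠ 0 := by linarith
    have h2 : 2 * (n:ℝ) + 1 ≠ 0 := by linarith
    have h3 : (n:ℝ) ≠ 0 := by linarith
    have cc : (1/((2*(n:ℝ)+1) * ((n:ℝ)-1))) * (2*(n:ℝ)-1-1) = 2/(2*(n:ℝ)+1) := by
      field_simp
      ring
    have n3I : M.nu3I = fun X => (2/(2*(n:ℝ)+1)) • u X := funext fun X => by
      rw [nu3I, vI, n4I, ← cc]
      module
    have n3J : M.nu3J = fun X => (2/(2*(n:ℝ)+1)) • u X := funext fun X => by
      rw [nu3J, vJ, n4J, ← cc]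
      module
    have n3K : M.nu3K = fun X => (2/(2*(n:ℝ)+1)) • u X := funext fun X => by
      rw [nu3K, vK, n4K, ← cc]
      module
    rw [n3I, n3J, n3K]
    refine ⟨rfl, rfl, ?_, ?_⟩
    · funext X
      rw [Pi.smul_apply, thetaXi, s0, smul_smul, smul_smul, hs]
      congr 1
      field_simp
      ring
    · funext X
      rw [Pi.smul_apply, smul_smul]
      congr 1
      field_simp
      norm_num
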